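/- arXiv:1403.4967 — 2 statements merged into one kernel-verified Lean document; each statement's English description precedes it below -/
import Mathlib

section
/- Let $(S,\mathcal L)$ be a linear space: $\mathcal L$ is a nonempty family of subsets of $S$ (lines), each with at least three points, and any two distinct points $a,b\in S$ lie on exactly one line, denoted $m(a,b)$. For $a\in S$ and $m\subseteq S$ put $a+m=\{a+x : x\in m\}$ and $2m=\{2x : x\in m\}$, where $a+x$ is the two-element multiset consisting of $a$ and $x$, and $2x=x+x$. The Veronese space $V_2(S,\mathcal L)$ has as points all two-element multisets in $S$, and as blocks all sets $a+m$ and $2m$ with $a\in S$, $m\in\mathcal L$. Its leaves are the sets $a+S$ ($a\in S$) and $2S$; every block $B$ lies in a unique leaf $T(B)$. Two points are adjacent if some block contains both. Let $L_1,K_1,L_2,K_2$ be blocks of $V_2(S,\mathcal L)$ in pairwise distinct leaves which form a quadrangle without diagonals, i.e. there are pairwise distinct points $p_1\in L_1\cap K_1$, $p_2\in K_1\cap L_2$, $p_3\in L_2\cap K_2$, $p_4\in K_2\cap L_1$ such that $p_1,p_3$ are not adjacent and $p_2,p_4$ are not adjacent. Let $K$ be a block that meets both $L_1$ and $L_2$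 and satisfies $T(K)\neq T(L_1)$ and $T(K)\neq T(L_2)$. Then one of the following holds: 1. $L_1=a+m$ and $L_2=b+m$ for distinct points $a,b\in S$ and a line $m\in\mathcal L$, and either $K=x+m(a,b)$ for some $x\in m$, or $a,b\in m$ and $K=2m$; 2. $\{L_1,L_2\}=\{2n,\;c+n\}$ (in either order) for a line $n\in\mathcal L$ and a point $c\in S$, and $K=x+m(x,c)$ for some $x\in n$ with $x\neq c$; 3. $L_1=a+m_1$ and $L_2=b+m_2$ for distinct points $a,b\in S$ and distinct lines $m_1,m_2\in\mathcal L$ sharing a point $c$, and $K=2\,m(a,b)$ or $K=c+m(a,b)$. -/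
/-- `B` has at least three elements. -/
def AtLeastThree {α : Type*} (B : Set α) : Prop :=
  ∃ a b c, a ∈ B ∧ b ∈ B ∧ c ∈ B ∧ a ≠ b ∧ a ≠ c ∧ b ≠ c

/-- `(α, L)` is a partial linear space. -/
def IsPLS {α : Type*} (L : Set (Set α)) : Prop :=
  L.Nonempty ∧ (∀ B ∈ L, AtLeastThree B) ∧
    ∀ p q : α, p ≠ q → ∀ B₁ ∈ L, ∀ B₂ ∈ L,
      p ∈ B₁ → q ∈ B₁ → p ∈ B₂ → q ∈ B₂ → B₁ = B₂

/-- `(α, L)` is a linear space. -/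
def IsLinearSpace {α : Type*} (L : Set (Set α)) : Prop :=
  IsPLS L ∧ ∀ p q : α, p ≠ q → ∃ B ∈ L, p ∈ B ∧ q ∈ B

/-- The set `{e + r·x : x ∈ B}` of multisets. -/
def veroBlock {S : Type*} (e : Multiset S) (r : ℕ) (B : Set S) : Set (Multiset S) :=
  { m | ∃ x ∈ B, m = e + Multiset.replicate r x }

/-- The blocks of the Veronese space of level `k` over `(S, L)`; its points are the multisets of
cardinality `k` in `S`, and all elements of blocks are such multisets. -/
def veroBlocks {S : Type*} (k : ℕ) (L : Set (Set S)) : Set (Set (Multiset S)) :=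
  { Bl | ∃ (r : ℕ) (e : Multiset S) (B : Set S),
      0 < r ∧ r ≤ k ∧ Multiset.card e = k - r ∧ B ∈ L ∧ Bl = veroBlock e r B }

/-- The leaves `e + r·S`, i.e. the blocks of the Veronese space over `(S, {S})`. -/
def veroLeaves (S : Type*) (k : ℕ) : Set (Set (Multiset S)) :=
  veroBlocks k {(Set.univ : Set S)}

/-- Two points are adjacent if some block contains both. -/
def VerAdj {S : Type*} (k : ℕ) (L : Set (Set S)) (f g : Multiset S) : Prop :=
  ∃ Bl ∈ veroBlocks k L, f ∈ Bl ∧ g ∈ Bl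

/-- `T` is a leaf containing `B` (for a block `B` of a Veronese space over a partial linear space
there is exactly one such `T`). -/
def IsLeafOf {S : Type*} (k : ℕ) (T B : Set (Multiset S)) : Prop :=
  T ∈ veroLeaves S k ∧ B ⊆ T

/-- The leaves of the blocks `B` and `B'` are different. -/
def DifferentLeaves {S : Type*} (k : ℕ) (B B' : Set (Multiset S)) : Prop :=
  ∃ T T' : Set (Multiset S), IsLeafOf k T B ∧ IsLeafOf k T' B' ∧ T ≠ T'

/-- The blocks `L₁, K₁, L₂, K₂` are, in this cyclic order, the sides of a quadrangle without
diagonals. -/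
def IsQuadrangleWithoutDiagonals {S : Type*} (k : ℕ) (L : Set (Set S))
    (L₁ K₁ L₂ K₂ : Set (Multiset S)) : Prop :=
  ∃ p₁ p₂ p₃ p₄ : Multiset S,
    p₁ ∈ L₁ ∩ K₁ ∧ p₂ ∈ K₁ ∩ L₂ ∧ p₃ ∈ L₂ ∩ K₂ ∧ p₄ ∈ K₂ ∩ L₁ ∧
    (p₁ ≠ p₂ ∧ p₁ ≠ p₃ ∧ p₁ ≠ p₄ ∧ p₂ ≠ p₃ ∧ p₂ ≠ p₄ ∧ p₃ ≠ p₄) ∧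
    ¬ VerAdj k L p₁ p₃ ∧ ¬ VerAdj k L p₂ p₄

/-- A proper quadrangle: a quadrangle without diagonals with sides in pairwise distinct leaves. -/
def IsProperQuadrangle {S : Type*} (k : ℕ) (L : Set (Set S))
    (L₁ K₁ L₂ K₂ : Set (Multiset S)) : Prop :=
  (L₁ ∈ veroBlocks k L ∧ K₁ ∈ veroBlocks k L ∧ L₂ ∈ veroBlocks k L ∧ K₂ ∈ veroBlocks k L) ∧
  (DifferentLeaves k L₁ K₁ ∧ DifferentLeaves k L₁ L₂ ∧ DifferentLeaves k L₁ K₂ ∧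
    DifferentLeaves k K₁ L₂ ∧ DifferentLeaves k K₁ K₂ ∧ DifferentLeaves k L₂ K₂) ∧
  IsQuadrangleWithoutDiagonals k L L₁ K₁ L₂ K₂

/-- The set `a + m`. -/
def addPt {S : Type*} (a : S) (m : Set S) : Set (Multiset S) :=
  { t | ∃ x ∈ m, t = ({a, x} : Multiset S) }

/-- The set `2m`. -/
def dbl {S : Type*} (m : Set S) : Set (Multiset S) :=
  { t | ∃ x ∈ m, t = ({x, x} : Multiset S) }

section

open Set

variable {S : Type*}

theorem Multiset.pair_eq_pair_iff {a b c d : S} :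
    ({a, b} : Multiset S) = {c, d} ↔ a = c ∧ b = d ∨ a = d ∧ b = c := by
  simp only [Multiset.insert_eq_cons, Multiset.cons_eq_cons, Multiset.singleton_inj,
    Multiset.singleton_eq_cons_iff]
  grind

theorem veroBlock_singleton (a : S) (m : Set S) : veroBlock {a} 1 m = addPt a m := by
  ext t
  simp [veroBlock, addPt, Multiset.insert_eq_cons, Multiset.singleton_add]

theorem veroBlock_zero (m : Set S) : veroBlock 0 2 m = dbl m := by
  ext t
  simp [veroBlock, dbl, Multiset.insert_eq_cons, Multiset.replicate_succ]

/-- The blocks of level two are the sets `a + m` and `2m`. -/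
theorem mem_veroBlocks_two {L : Set (Set S)} {B : Set (Multiset S)} :
    B ∈ veroBlocks 2 L ↔ (∃ a, ∃ m ∈ L, B = addPt a m) ∨ ∃ m ∈ L, B = dbl m := by
  constructor
  · rintro ⟨r, e, m, hr, hr2, he, hm, rfl⟩
    obtain rfl | rfl : r = 1 ∨ r = 2 := by omega
    · obtain ⟨a, rfl⟩ := Multiset.card_eq_one.1 he
      exact .inl ⟨a, m, hm, veroBlock_singleton a m⟩
    · obtain rfl := Multiset.card_eq_zero.1 he
      exact .inr ⟨m, hm, veroBlock_zero m⟩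
  · rintro (⟨a, m, hm, rfl⟩ | ⟨m, hm, rfl⟩)
    · exact ⟨1, {a}, m, by simp, by simp, by simp, hm, (veroBlock_singleton a m).symm⟩
    · exact ⟨2, 0, m, by simp, by simp, by simp, hm, (veroBlock_zero m).symm⟩

theorem mem_veroLeaves_two {T : Set (Multiset S)} :
    T ∈ veroLeaves S 2 ↔ (∃ a, T = addPt a univ) ∨ T = dbl univ := by
  simp [veroLeaves, mem_veroBlocks_two]

theorem pair_mem_addPt {a x y : S} {m : Set S} :
    ({x, y} : Multiset S) ∈ addPt a m ↔ x = a ∧ y ∈ m ∨ y = a ∧ x ∈ m := by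
  simp only [addPt, mem_ofPred_eq, Multiset.pair_eq_pair_iff]
  grind

theorem pair_mem_dbl {x y : S} {m : Set S} :
    ({x, y} : Multiset S) ∈ dbl m ↔ x = y ∧ x ∈ m := by
  simp only [dbl, mem_ofPred_eq, Multiset.pair_eq_pair_iff]
  grind

/-- The only leaf containing `a + m` is `a + S`. -/
theorem IsLeafOf.eq_addPt {T : Set (Multiset S)} {a : S} {m : Set S} (hm : AtLeastThree m)
    (h : IsLeafOf 2 T (addPt a m)) : T = addPt a univ := by
  obtain ⟨x, y, z, hx, hy, hz, hxy, hxz, hyz⟩ := hm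
  have h1 := h.2 (pair_mem_addPt.2 (.inl ⟨rfl, hx⟩))
  have h2 := h.2 (pair_mem_addPt.2 (.inl ⟨rfl, hy⟩))
  rcases mem_veroLeaves_two.1 h.1 with ⟨b, rfl⟩ | rfl
  · rw [pair_mem_addPt] at h1 h2
    grind
  · rw [pair_mem_dbl] at h1 h2
    grind

/-- The only leaf containing `2m` is `2S`. -/
theorem IsLeafOf.eq_dbl {T : Set (Multiset S)} {m : Set S} (hm : AtLeastThree m)
    (h : IsLeafOf 2 T (dbl m)) : T = dbl univ := by
  obtain ⟨x, y, z, hx, hy, hz, hxy, hxz, hyz⟩ := hm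
  have h1 := h.2 (pair_mem_dbl.2 ⟨rfl, hx⟩)
  have h2 := h.2 (pair_mem_dbl.2 ⟨rfl, hy⟩)
  rcases mem_veroLeaves_two.1 h.1 with ⟨b, rfl⟩ | rfl
  · rw [pair_mem_addPt] at h1 h2
    grind
  · rfl

theorem DifferentLeaves.ne_of_addPt {a b : S} {m n : Set S} (hm : AtLeastThree m)
    (hn : AtLeastThree n) (h : DifferentLeaves 2 (addPt a m) (addPt b n)) : a ≠ b := by
  rintro rfl
  obtain ⟨T, T', hT, hT', hne⟩ := h
  exact hne ((hT.eq_addPt hm).trans (hT'.eq_addPt hn).symm)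

theorem not_differentLeaves_dbl {m n : Set S} (hm : AtLeastThree m) (hn : AtLeastThree n) :
    ¬ DifferentLeaves 2 (dbl m) (dbl n) := by
  rintro ⟨T, T', hT, hT', hne⟩
  exact hne ((hT.eq_dbl hm).trans (hT'.eq_dbl hn).symm)

theorem DifferentLeaves.symm {k : ℕ} {B B' : Set (Multiset S)} (h : DifferentLeaves k B B') :
    DifferentLeaves k B' B := by
  obtain ⟨T, T', hT, hT', hne⟩ := h
  exact ⟨T', T, hT', hT, hne.symm⟩

theorem addPt_inter_addPt_nonempty {a b : S} (hab : a ≠ b) {m n : Set S} :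
    (addPt a m ∩ addPt b n).Nonempty ↔ b ∈ m ∧ a ∈ n := by
  constructor
  · rintro ⟨_, ⟨x, hx, rfl⟩, h⟩
    rw [pair_mem_addPt] at h
    grind
  · rintro ⟨hb, ha⟩
    exact ⟨{a, b}, pair_mem_addPt.2 (.inl ⟨rfl, hb⟩), pair_mem_addPt.2 (.inr ⟨rfl, ha⟩)⟩

theorem dbl_inter_addPt_nonempty {a : S} {m n : Set S} :
    (dbl m ∩ addPt a n).Nonempty ↔ a ∈ m ∧ a ∈ n := by
  constructor
  · rintro ⟨_, ⟨x, hx, rfl⟩, h⟩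
    rw [pair_mem_addPt] at h
    grind
  · rintro ⟨hm, hn⟩
    exact ⟨{a, a}, pair_mem_dbl.2 ⟨rfl, hm⟩, pair_mem_addPt.2 (.inl ⟨rfl, hn⟩)⟩

/-- A block of `V₂(S, ℒ)` meeting `a + m₁` and `b + m₂` from outside their leaves. -/
theorem transversal_addPt_addPt {L : Set (Set S)} (h3 : ∀ B ∈ L, AtLeastThree B) {a b : S}
    {m₁ m₂ : Set S} (hm₁ : m₁ ∈ L) (hm₂ : m₂ ∈ L) {K : Set (Multiset S)}
    (hK : K ∈ veroBlocks 2 L) (h₁ : (K ∩ addPt a m₁).Nonempty)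
    (h₂ : (K ∩ addPt b m₂).Nonempty) (hT₁ : DifferentLeaves 2 K (addPt a m₁))
    (hT₂ : DifferentLeaves 2 K (addPt b m₂)) :
    ∃ k ∈ L, a ∈ k ∧ b ∈ k ∧
      ((∃ c, c ∈ m₁ ∧ c ∈ m₂ ∧ K = addPt c k) ∨ (a ∈ m₁ ∧ b ∈ m₂ ∧ K = dbl k)) := by
  rcases mem_veroBlocks_two.1 hK with ⟨c, k, hk, rfl⟩ | ⟨k, hk, rfl⟩
  · rw [addPt_inter_addPt_nonempty (hT₁.ne_of_addPt (h3 _ hk) (h3 _ hm₁))] at h₁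
    rw [addPt_inter_addPt_nonempty (hT₂.ne_of_addPt (h3 _ hk) (h3 _ hm₂))] at h₂
    exact ⟨k, hk, h₁.1, h₂.1, .inl ⟨c, h₁.2, h₂.2, rfl⟩⟩
  · rw [dbl_inter_addPt_nonempty] at h₁ h₂
    exact ⟨k, hk, h₁.1, h₂.1, .inr ⟨h₁.2, h₂.2, rfl⟩⟩

/-- A block of `V₂(S, ℒ)` meeting `2n` and `c + m` from outside their leaves. -/
theorem transversal_dbl_addPt {L : Set (Set S)} (h3 : ∀ B ∈ L, AtLeastThree B) {c : S}
    {n m : Set S} (hn : n ∈ L) (hm : m ∈ L) {K : Set (Multiset S)}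
    (hK : K ∈ veroBlocks 2 L) (h₁ : (K ∩ dbl n).Nonempty)
    (h₂ : (K ∩ addPt c m).Nonempty) (hT₁ : DifferentLeaves 2 K (dbl n))
    (hT₂ : DifferentLeaves 2 K (addPt c m)) :
    ∃ x, x ∈ n ∧ x ∈ m ∧ x ≠ c ∧ ∃ k ∈ L, x ∈ k ∧ c ∈ k ∧ K = addPt x k := by
  rcases mem_veroBlocks_two.1 hK with ⟨x, k, hk, rfl⟩ | ⟨k, hk, rfl⟩
  · have hne := hT₂.ne_of_addPt (h3 _ hk) (h3 _ hm)
    rw [addPt_inter_addPt_nonempty hne] at h₂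
    rw [inter_comm, dbl_inter_addPt_nonempty] at h₁
    exact ⟨x, h₁.1, h₂.2, hne, k, hk, h₁.2, h₂.1, rfl⟩
  · exact (not_differentLeaves_dbl (h3 _ hk) (h3 _ hn) hT₁).elim

/-- If two blocks from distinct leaves meet both `2n` and `c + m` from outside their leaves,
then `n = m`. -/
theorem eq_of_two_transversals_dbl_addPt {L : Set (Set S)} (hL : IsPLS L) {c : S}
    {n m : Set S} (hn : n ∈ L) (hm : m ∈ L) {K₁ K₂ : Set (Multiset S)}
    (hK₁ : K₁ ∈ veroBlocks 2 L) (hK₂ : K₂ ∈ veroBlocks 2 L)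
    (hK : DifferentLeaves 2 K₁ K₂)
    (h₁n : (K₁ ∩ dbl n).Nonempty) (h₁m : (K₁ ∩ addPt c m).Nonempty)
    (h₂n : (K₂ ∩ dbl n).Nonempty) (h₂m : (K₂ ∩ addPt c m).Nonempty)
    (hT₁n : DifferentLeaves 2 K₁ (dbl n)) (hT₁m : DifferentLeaves 2 K₁ (addPt c m))
    (hT₂n : DifferentLeaves 2 K₂ (dbl n)) (hT₂m : DifferentLeaves 2 K₂ (addPt c m)) :
    n = m := by
  obtain ⟨x, hxn, hxm, -, k, hk, -, -, rfl⟩ :=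
    transversal_dbl_addPt hL.2.1 hn hm hK₁ h₁n h₁m hT₁n hT₁m
  obtain ⟨y, hyn, hym, -, l, hl, -, -, rfl⟩ :=
    transversal_dbl_addPt hL.2.1 hn hm hK₂ h₂n h₂m hT₂n hT₂m
  exact hL.2.2 x y (hK.ne_of_addPt (hL.2.1 _ hk) (hL.2.1 _ hl)) n hn m hm hxn hyn hxm hym

end

theorem stmt_6 {S : Type*} (ℒ : Set (Set S)) (hL : IsLinearSpace ℒ)
    (L₁ K₁ L₂ K₂ : Set (Multiset S)) (hQ : IsProperQuadrangle 2 ℒ L₁ K₁ L₂ K₂)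
    (K : Set (Multiset S)) (hK : K ∈ veroBlocks 2 ℒ)
    (hKL₁ : (K ∩ L₁).Nonempty) (hKL₂ : (K ∩ L₂).Nonempty)
    (hT₁ : DifferentLeaves 2 K L₁) (hT₂ : DifferentLeaves 2 K L₂) :
    (∃ a b : S, a ≠ b ∧ ∃ m ∈ ℒ, L₁ = addPt a m ∧ L₂ = addPt b m ∧
      ((∃ x ∈ m, ∃ mab ∈ ℒ, a ∈ mab ∧ b ∈ mab ∧ K = addPt x mab) ∨
       (a ∈ m ∧ b ∈ m ∧ K = dbl m))) ∨
    (∃ n ∈ ℒ, ∃ c : S,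
      ((L₁ = dbl n ∧ L₂ = addPt c n) ∨ (L₁ = addPt c n ∧ L₂ = dbl n)) ∧
      ∃ x ∈ n, x ≠ c ∧ ∃ mxc ∈ ℒ, x ∈ mxc ∧ c ∈ mxc ∧ K = addPt x mxc) ∨
    (∃ a b c : S, a ≠ b ∧ ∃ m₁ ∈ ℒ, ∃ m₂ ∈ ℒ, m₁ ≠ m₂ ∧ c ∈ m₁ ∧ c ∈ m₂ ∧
      L₁ = addPt a m₁ ∧ L₂ = addPt b m₂ ∧
      ∃ mab ∈ ℒ, a ∈ mab ∧ b ∈ mab ∧ (K = dbl mab ∨ K = addPt c mab)) := by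
  obtain ⟨⟨hL₁, hK₁, hL₂, hK₂⟩, ⟨dLK, dLL, dLK', dKL, dKK, dLK''⟩,
    p₁, p₂, p₃, p₄, h₁, h₂, h₃, h₄, -⟩ := hQ
  have i₁₁ : (K₁ ∩ L₁).Nonempty := ⟨p₁, h₁.2, h₁.1⟩
  have i₁₂ : (K₁ ∩ L₂).Nonempty := ⟨p₂, h₂⟩
  have i₂₁ : (K₂ ∩ L₁).Nonempty := ⟨p₄, h₄⟩
  have i₂₂ : (K₂ ∩ L₂).Nonempty := ⟨p₃, h₃.2, h₃.1⟩
  have h3 := hL.1.2.1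
  rcases mem_veroBlocks_two.1 hL₁ with ⟨a, m₁, hm₁, rfl⟩ | ⟨n, hn, rfl⟩ <;>
    rcases mem_veroBlocks_two.1 hL₂ with ⟨b, m₂, hm₂, rfl⟩ | ⟨n', hn', rfl⟩
  · have hab : a ≠ b := dLL.ne_of_addPt (h3 _ hm₁) (h3 _ hm₂)
    obtain ⟨k, hk, hak, hbk, hcase⟩ :=
      transversal_addPt_addPt h3 hm₁ hm₂ hK hKL₁ hKL₂ hT₁ hT₂
    by_cases hm : m₁ = m₂
    · subst hm
      refine .inl ⟨a, b, hab, m₁, hm₁, rfl, rfl, ?_⟩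
      rcases hcase with ⟨c, hc, -, rfl⟩ | ⟨ha, hb, rfl⟩
      · exact .inl ⟨c, hc, k, hk, hak, hbk, rfl⟩
      · obtain rfl := hL.1.2.2 a b hab k hk m₁ hm₁ hak hbk ha hb
        exact .inr ⟨ha, hb, rfl⟩
    · refine .inr (.inr ?_)
      rcases hcase with ⟨c, hc₁, hc₂, rfl⟩ | ⟨-, -, rfl⟩
      · exact ⟨a, b, c, hab, m₁, hm₁, m₂, hm₂, hm, hc₁, hc₂, rfl, rfl, k, hk, hak, hbk,
          .inr rfl⟩
      · obtain ⟨c, hc₁, hc₂⟩ : ∃ c, c ∈ m₁ ∧ c ∈ m₂ := by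
          obtain ⟨k₁, hk₁, -, -, ⟨c, hc₁, hc₂, -⟩ | ⟨-, -, rfl⟩⟩ :=
            transversal_addPt_addPt h3 hm₁ hm₂ hK₁ i₁₁ i₁₂ dLK.symm dKL
          · exact ⟨c, hc₁, hc₂⟩
          obtain ⟨k₂, hk₂, -, -, ⟨c, hc₁, hc₂, -⟩ | ⟨-, -, rfl⟩⟩ :=
            transversal_addPt_addPt h3 hm₁ hm₂ hK₂ i₂₁ i₂₂ dLK'.symm dLK''.symm
          · exact ⟨c, hc₁, hc₂⟩
          exact (not_differentLeaves_dbl (h3 _ hk₁) (h3 _ hk₂) dKK).elim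
        exact ⟨a, b, c, hab, m₁, hm₁, m₂, hm₂, hm, hc₁, hc₂, rfl, rfl, k, hk, hak, hbk,
          .inl rfl⟩
  · obtain rfl := eq_of_two_transversals_dbl_addPt hL.1 hn' hm₁ hK₁ hK₂ dKK i₁₂ i₁₁ i₂₂ i₂₁
      dKL dLK.symm dLK''.symm dLK'.symm
    obtain ⟨x, hx, -, hxc, k, hk, hxk, hck, rfl⟩ :=
      transversal_dbl_addPt h3 hn' hm₁ hK hKL₂ hKL₁ hT₂ hT₁
    exact .inr (.inl ⟨_, hn', a, .inr ⟨rfl, rfl⟩, x, hx, hxc, k, hk, hxk, hck, rfl⟩)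
  · obtain rfl := eq_of_two_transversals_dbl_addPt hL.1 hn hm₂ hK₁ hK₂ dKK i₁₁ i₁₂ i₂₁ i₂₂
      dLK.symm dKL dLK'.symm dLK''.symm
    obtain ⟨x, hx, -, hxc, k, hk, hxk, hck, rfl⟩ :=
      transversal_dbl_addPt h3 hn hm₂ hK hKL₁ hKL₂ hT₁ hT₂
    exact .inr (.inl ⟨_, hn, b, .inl ⟨rfl, rfl⟩, x, hx, hxc, k, hk, hxk, hck, rfl⟩)
  · exact (not_differentLeaves_dbl (h3 _ hn) (h3 _ hn') dLL).elim
end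

section
/- Let $K$ be a field with $\operatorname{char} K\neq 2$, let $V$ be a $K$-vector space of (possibly infinite) dimension at least $3$, and let $\mathbb P(V)$ be the projective space whose points are the $1$-dimensional subspaces $\langle u\rangle$ of $V$ and whose lines are the sets of points contained in a $2$-dimensional subspace. For a point–line structure $\mathfrak M_0=(S,\mathcal L)$ and an integer $k\ge 0$, let the Veronese space $\mathbf V_k(\mathfrak M_0)$ have as points the multisets of size $k$ with elements in $S$, and as blocks the sets $\{e+r\cdot x : x\in B\}$ with $0<r\le k$, $e$ a multiset of size $k-r$ in $S$, and $B\in\mathcal L$. A hyperplane of a point–line structure is a proper subset $H$ of its points that meets every block and contains every block that has at least two points in $H$. Let $\xi$ be a nonzero, possibly degenerate, alternating bilinear form on $V$, and let $$H=\{\langle u\rangle+\langle v\rangle : u,v\in V\setminus\{0\},\ \xi(u,v)=0\}$$ be the set of points of $\mathbf V_2(\mathbb P(V))$ determined by it. Then $H$ is a hyperplane of $\mathbf V_2(\mathbb P(V))$. Moreover, let $\mathfrak A$ be the reduct whose points are the points of $\mathbf V_2(\mathbb P(V))$ not in $H$ and whose lines are the sets $L\setminus H$ for the blocks $L$ of $\mathbf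 V_2(\mathbb P(V))$ not contained in $H$. Then for every division ring $D$ with at least $3$ elements, every $D$-vector space $W$ and every integer $k\ge 0$, $\mathfrak A$ is not isomorphic to $\mathbf V_k(AG(W))$, where $AG(W)$ is the affine space with point set $W$ and with the cosets of the $1$-dimensional subspaces of $W$ as lines. Here an isomorphism is a bijection between the point sets that maps the set of lines of $\mathfrak A$ onto the set of blocks of $\mathbf V_k(AG(W))$. -/
/-- The points of the `k`-th Veronese space over a structure with point set `S`: the multisets of
size `k` with elements in `S`. -/
def veroPoints (S : Type*) (k : ℕ) : Set (Multiset S) :=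
  { m | Multiset.card m = k }

/-- `X` is closed under the blocks that have at least two points in it. -/
def IsSubspace {α : Type*} (Blk : Set (Set α)) (X : Set α) : Prop :=
  ∀ B ∈ Blk, (∃ p ∈ B ∩ X, ∃ q ∈ B ∩ X, p ≠ q) → B ⊆ X

/-- A hyperplane of a point-line structure with point set `P` and blocks `Blk`: a proper subspace
that meets every block. -/
def IsGeomHyperplane {α : Type*} (P : Set α) (Blk : Set (Set α)) (X : Set α) : Prop :=
  X ⊆ P ∧ X ≠ P ∧ IsSubspace Blk X ∧ ∀ B ∈ Blk, (B ∩ X).Nonempty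

/-- The lines of the reduct obtained by deleting the points of `H`. -/
def reductLines {α : Type*} (Blk : Set (Set α)) (H : Set α) : Set (Set α) :=
  { l | ∃ L ∈ Blk, ¬ L ⊆ H ∧ l = L \ H }

/-- Isomorphism of the point-line structures `(P, Blk)` and `(Q, Blk')`: a bijection from `P` onto
`Q` that maps the family `Blk` onto the family `Blk'`. -/
def GeomIsomorphic {α β : Type*} (P : Set α) (Blk : Set (Set α))
    (Q : Set β) (Blk' : Set (Set β)) : Prop :=
  ∃ φ : α → β, Set.BijOn φ P Q ∧ (fun l : Set α => φ '' l) '' Blk = Blk'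

/-- The lines of the projective space over `V`. -/
def projLines (K V : Type*) [Field K] [AddCommGroup V] [Module K V] :
    Set (Set (Projectivization K V)) :=
  { L | ∃ W : Submodule K V, Module.finrank K ↥W = 2 ∧
      L = { p : Projectivization K V | p.submodule ≤ W } }

/-- The set of the multisets `⟨u⟩ + ⟨v⟩` with `ξ u v = 0`. -/
def conjugatePairs {K V : Type*} [Field K] [AddCommGroup V] [Module K V]
    (ξ : V →ₗ[K] V →ₗ[K] K) : Set (Multiset (Projectivization K V)) :=
  { m | ∃ (u v : V) (hu : u ≠ 0) (hv : v ≠ 0), ξ u v = 0 ∧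
      m = ({Projectivization.mk K u hu, Projectivization.mk K v hv} :
        Multiset (Projectivization K V)) }

/-- The lines of the affine space over `W`: the cosets of the one-dimensional subspaces. -/
def agLines (D W : Type*) [DivisionRing D] [AddCommGroup W] [Module D W] : Set (Set W) :=
  { l | ∃ v w : W, w ≠ 0 ∧ l = { x : W | ∃ t : D, x = v + t • w } }

open Projectivization
open scoped LinearAlgebra.Projectivization

/-- Two points are joined when some block contains both of them. -/
def BlockJoined {α : Type*} (Blk : Set (Set α)) (p q : α) : Prop :=
  ∃ B ∈ Blk, p ∈ B ∧ q ∈ B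

/-- Every point of `l` is joined with every point of `l'`. -/
def FullyJoined {α : Type*} (Blk : Set (Set α)) (l l' : Set α) : Prop :=
  ∀ p ∈ l, ∀ q ∈ l', BlockJoined Blk p q

/-- Any two blocks can be replaced by fully joined blocks that have a common point. -/
def AnyTwoClassesMeet {α : Type*} (Blk : Set (Set α)) : Prop :=
  ∀ l₁ ∈ Blk, ∀ l₂ ∈ Blk, ∃ l₁' ∈ Blk, ∃ l₂' ∈ Blk,
    FullyJoined Blk l₁ l₁' ∧ FullyJoined Blk l₂ l₂' ∧ (l₁' ∩ l₂').Nonempty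

/-- Among any three blocks through a point, two are fully joined. -/
def AtMostTwoClassesAtPoint {α : Type*} (Blk : Set (Set α)) : Prop :=
  ∀ m, ∀ l₁ ∈ Blk, ∀ l₂ ∈ Blk, ∀ l₃ ∈ Blk, m ∈ l₁ → m ∈ l₂ → m ∈ l₃ →
    FullyJoined Blk l₁ l₂ ∨ FullyJoined Blk l₁ l₃ ∨ FullyJoined Blk l₂ l₃

section Transfer

variable {α β : Type*} {P : Set α} {Blk : Set (Set α)} {Blk' : Set (Set β)} {φ : α → β}

theorem blockJoined_image_iff (hφ : Set.InjOn φ P) (hsub : ∀ l ∈ Blk, l ⊆ P)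
    (hB : (fun l : Set α => φ '' l) '' Blk = Blk') {p q : α} (hp : p ∈ P) (hq : q ∈ P) :
    BlockJoined Blk' (φ p) (φ q) ↔ BlockJoined Blk p q := by
  subst hB
  constructor
  · rintro ⟨_, ⟨l, hl, rfl⟩, hpl, hql⟩
    exact ⟨l, hl, (hφ.mem_image_iff (hsub l hl) hp).1 hpl,
      (hφ.mem_image_iff (hsub l hl) hq).1 hql⟩
  · rintro ⟨l, hl, hpl, hql⟩
    exact ⟨_, ⟨l, hl, rfl⟩, ⟨p, hpl, rfl⟩, ⟨q, hql, rfl⟩⟩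

theorem fullyJoined_image_iff (hφ : Set.InjOn φ P) (hsub : ∀ l ∈ Blk, l ⊆ P)
    (hB : (fun l : Set α => φ '' l) '' Blk = Blk') {l l' : Set α} (hl : l ∈ Blk)
    (hl' : l' ∈ Blk) : FullyJoined Blk' (φ '' l) (φ '' l') ↔ FullyJoined Blk l l' := by
  constructor
  · intro h p hp q hq
    exact (blockJoined_image_iff hφ hsub hB (hsub l hl hp) (hsub l' hl' hq)).1
      (h _ ⟨p, hp, rfl⟩ _ ⟨q, hq, rfl⟩)
  · rintro h _ ⟨p, hp, rfl⟩ _ ⟨q, hq, rfl⟩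
    exact (blockJoined_image_iff hφ hsub hB (hsub l hl hp) (hsub l' hl' hq)).2 (h p hp q hq)

theorem AnyTwoClassesMeet.of_image (hφ : Set.InjOn φ P) (hsub : ∀ l ∈ Blk, l ⊆ P)
    (hB : (fun l : Set α => φ '' l) '' Blk = Blk') (h : AnyTwoClassesMeet Blk') :
    AnyTwoClassesMeet Blk := by
  intro l₁ h₁ l₂ h₂
  have him : ∀ l ∈ Blk, φ '' l ∈ Blk' := fun l hl => hB ▸ ⟨l, hl, rfl⟩
  obtain ⟨m₁, hm₁, m₂, hm₂, hj₁, hj₂, y, hy₁, hy₂⟩ := h _ (him l₁ h₁) _ (him l₂ h₂)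
  have hm₁' := hm₁
  have hm₂' := hm₂
  rw [← hB] at hm₁' hm₂'
  obtain ⟨l₁', h₁', rfl⟩ := hm₁'
  obtain ⟨l₂', h₂', rfl⟩ := hm₂'
  obtain ⟨x, hx, rfl⟩ := hy₁
  exact ⟨l₁', h₁', l₂', h₂', (fullyJoined_image_iff hφ hsub hB h₁ h₁').1 hj₁,
    (fullyJoined_image_iff hφ hsub hB h₂ h₂').1 hj₂, x, hx,
    (hφ.mem_image_iff (hsub l₂' h₂') (hsub l₁' h₁' hx)).1 hy₂⟩

theorem AtMostTwoClassesAtPoint.image (hφ : Set.InjOn φ P) (hsub : ∀ l ∈ Blk, l ⊆ P)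
    (hB : (fun l : Set α => φ '' l) '' Blk = Blk') (h : AtMostTwoClassesAtPoint Blk) :
    AtMostTwoClassesAtPoint Blk' := by
  intro y m₁ hm₁ m₂ hm₂ m₃ hm₃ hy₁ hy₂ hy₃
  rw [← hB] at hm₁ hm₂ hm₃
  obtain ⟨l₁, h₁, rfl⟩ := hm₁
  obtain ⟨l₂, h₂, rfl⟩ := hm₂
  obtain ⟨l₃, h₃, rfl⟩ := hm₃
  obtain ⟨x, hx, rfl⟩ := hy₁
  have hxP := hsub l₁ h₁ hx
  have := h x l₁ h₁ l₂ h₂ l₃ h₃ hx ((hφ.mem_image_iff (hsub l₂ h₂) hxP).1 hy₂)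
    ((hφ.mem_image_iff (hsub l₃ h₃) hxP).1 hy₃)
  rwa [← fullyJoined_image_iff hφ hsub hB h₁ h₂, ← fullyJoined_image_iff hφ hsub hB h₁ h₃,
    ← fullyJoined_image_iff hφ hsub hB h₂ h₃] at this

end Transfer

theorem Multiset.pair_eq_pair_iff_or {α : Type*} {a b c d : α} :
    ({a, b} : Multiset α) = {c, d} ↔ a = c ∧ b = d ∨ a = d ∧ b = c := by
  constructor
  · intro h
    rcases Multiset.cons_eq_cons.1 h with ⟨rfl, h⟩ | ⟨hne, cs, h₁, h₂⟩
    · exact Or.inl ⟨rfl, Multiset.singleton_inj.1 ((Multiset.cons_inj_right _).1 h)⟩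
    · have hb : c ∈ ({b} : Multiset α) := h₁ ▸ Multiset.mem_cons_self c cs
      have hd : a ∈ ({d} : Multiset α) := h₂ ▸ Multiset.mem_cons_self a cs
      exact Or.inr ⟨Multiset.mem_singleton.1 hd, (Multiset.mem_singleton.1 hb).symm⟩
  · rintro (⟨rfl, rfl⟩ | ⟨rfl, rfl⟩)
    · rfl
    · exact Multiset.pair_comm _ _

theorem veroBlocks_subset_veroPoints {S : Type*} {k : ℕ} {L : Set (Set S)}
    {l : Set (Multiset S)} (hl : l ∈ veroBlocks k L) : l ⊆ veroPoints S k := by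
  obtain ⟨r, e, B, -, hrk, he, -, rfl⟩ := hl
  rintro _ ⟨x, -, rfl⟩
  simp only [veroPoints, Set.mem_ofPred_eq, Multiset.card_add, Multiset.card_replicate, he]
  omega

theorem mem_veroBlocks_two_iff {S : Type*} {L : Set (Set S)} {l : Set (Multiset S)} :
    l ∈ veroBlocks 2 L ↔ (∃ p, ∃ B ∈ L, l = {m | ∃ x ∈ B, m = {p, x}}) ∨
      ∃ B ∈ L, l = {m | ∃ x ∈ B, m = {x, x}} := by
  constructor
  · rintro ⟨r, e, B, h0, h2, he, hB, rfl⟩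
    obtain rfl | rfl : r = 1 ∨ r = 2 := by omega
    · obtain ⟨p, rfl⟩ := Multiset.card_eq_one.1 he
      exact Or.inl ⟨p, B, hB, rfl⟩
    · obtain rfl := Multiset.card_eq_zero.1 he
      refine Or.inr ⟨B, hB, ?_⟩
      ext m
      simp [veroBlock, Multiset.replicate_succ]
  · rintro (⟨p, B, hB, rfl⟩ | ⟨B, hB, rfl⟩)
    · exact ⟨1, {p}, B, by simp, by simp, by simp, hB, rfl⟩
    · refine ⟨2, 0, B, by simp, by simp, by simp, hB, ?_⟩
      ext m
      simp [veroBlock, Multiset.replicate_succ]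

section Projective

variable {K V : Type*} [Field K] [AddCommGroup V] [Module K V]

theorem submodule_le_iff_rep_mem {x : ℙ K V} {W : Submodule K V} :
    x.submodule ≤ W ↔ x.rep ∈ W := by
  rw [submodule_eq, Submodule.span_singleton_le_iff_mem]

theorem finrank_span_rep_pair {x y : ℙ K V} (h : x ≠ y) :
    Module.finrank K (Submodule.span K {x.rep, y.rep}) = 2 := by
  have h1 := linearIndependent_pair_iff_ne.2 h
  have h2 := finrank_span_eq_card h1
  rwa [Matrix.range_cons_cons_empty, Fintype.card_fin] at h2

theorem exists_projLine_through {x y : ℙ K V} (h : x ≠ y) :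
    ∃ B ∈ projLines K V, x ∈ B ∧ y ∈ B :=
  ⟨_, ⟨Submodule.span K {x.rep, y.rep}, finrank_span_rep_pair h, rfl⟩,
    submodule_le_iff_rep_mem.2 (Submodule.subset_span (by simp)),
    submodule_le_iff_rep_mem.2 (Submodule.subset_span (by simp))⟩

theorem eq_span_rep_pair {x y : ℙ K V} (h : x ≠ y) {W : Submodule K V}
    (hW : Module.finrank K W = 2) (hx : x.rep ∈ W) (hy : y.rep ∈ W) :
    Submodule.span K {x.rep, y.rep} = W := by
  have : FiniteDimensional K W := Module.finite_of_finrank_pos (by omega)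
  refine Submodule.eq_of_le_of_finrank_eq ?_ (by rw [finrank_span_rep_pair h, hW])
  rw [Submodule.span_le]
  rintro _ (rfl | rfl) <;> assumption

theorem exists_ne_zero_mem_eq_zero {W : Submodule K V} (hW : Module.finrank K W = 2)
    (f : V →ₗ[K] K) : ∃ w ∈ W, w ≠ 0 ∧ f w = 0 := by
  have : FiniteDimensional K W := Module.finite_of_finrank_pos (by omega)
  have h := (f.comp W.subtype).ker_ne_bot_of_finrank_lt (by simp [hW])
  obtain ⟨w, hw, hw0⟩ := Submodule.exists_mem_ne_zero_of_ne_bot h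
  exact ⟨w, w.2, by simpa using hw0, by simpa using hw⟩

variable {ξ : V →ₗ[K] V →ₗ[K] K}

theorem mk_pair_mem_conjugatePairs_iff (halt : ξ.IsAlt) {u v : V} (hu : u ≠ 0) (hv : v ≠ 0) :
    ({mk K u hu, mk K v hv} : Multiset (ℙ K V)) ∈ conjugatePairs ξ ↔ ξ u v = 0 := by
  constructor
  · rintro ⟨u', v', hu', hv', h0, h⟩
    rcases Multiset.pair_eq_pair_iff_or.1 h with ⟨h1, h2⟩ | ⟨h1, h2⟩ <;>
    · obtain ⟨a, rfl⟩ := (mk_eq_mk_iff' K _ _ _ _).1 h1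
      obtain ⟨b, rfl⟩ := (mk_eq_mk_iff' K _ _ _ _).1 h2
      simp [h0, ← halt.neg u' v']
  · intro h
    exact ⟨u, v, hu, hv, h, rfl⟩

theorem pair_mem_conjugatePairs_iff (halt : ξ.IsAlt) {p q : ℙ K V} :
    ({p, q} : Multiset (ℙ K V)) ∈ conjugatePairs ξ ↔ ξ p.rep q.rep = 0 := by
  rw [← mk_pair_mem_conjugatePairs_iff halt p.rep_nonzero q.rep_nonzero, mk_rep, mk_rep]

theorem pair_self_mem_conjugatePairs (halt : ξ.IsAlt) (p : ℙ K V) :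
    ({p, p} : Multiset (ℙ K V)) ∈ conjugatePairs ξ :=
  (pair_mem_conjugatePairs_iff halt).2 (halt _)

theorem isGeomHyperplane_conjugatePairs (halt : ξ.IsAlt) (hξ : ξ ≠ 0) :
    IsGeomHyperplane (veroPoints (ℙ K V) 2) (veroBlocks 2 (projLines K V))
      (conjugatePairs ξ) := by
  refine ⟨?_, ?_, ?_, ?_⟩
  · rintro _ ⟨u, v, hu, hv, -, rfl⟩
    simp [veroPoints]
  · intro h
    apply hξ
    ext u v
    by_cases hu : u = 0
    · simp [hu]
    by_cases hv : v = 0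
    · simp [hv]
    refine (mk_pair_mem_conjugatePairs_iff halt hu hv).1 ?_
    rw [h]
    simp [veroPoints]
  · intro l hl hpq
    rcases mem_veroBlocks_two_iff.1 hl with ⟨p, _, ⟨W, hW, rfl⟩, rfl⟩ | ⟨B, -, rfl⟩
    · obtain ⟨_, ⟨⟨x, hx, rfl⟩, hxH⟩, _, ⟨⟨y, hy, rfl⟩, hyH⟩, hne⟩ := hpq
      have hxy : x ≠ y := by rintro rfl; exact hne rfl
      rintro _ ⟨z, hz, rfl⟩
      rw [pair_mem_conjugatePairs_iff halt] at *
      have hz' : z.rep ∈ Submodule.span K {x.rep, y.rep} := by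
        rw [eq_span_rep_pair hxy hW (submodule_le_iff_rep_mem.1 hx)
          (submodule_le_iff_rep_mem.1 hy)]
        exact submodule_le_iff_rep_mem.1 hz
      obtain ⟨a, b, h⟩ := Submodule.mem_span_pair.1 hz'
      rw [← h]
      simp [hxH, hyH]
    · rintro _ ⟨x, -, rfl⟩
      exact pair_self_mem_conjugatePairs halt x
  · intro l hl
    rcases mem_veroBlocks_two_iff.1 hl with ⟨p, _, ⟨W, hW, rfl⟩, rfl⟩ | ⟨_, ⟨W, hW, rfl⟩, rfl⟩
    · obtain ⟨w, hwW, hw0, hw⟩ := exists_ne_zero_mem_eq_zero hW (ξ p.rep)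
      refine ⟨{p, mk K w hw0}, ⟨_, ?_, rfl⟩, ⟨_, _, p.rep_nonzero, hw0, hw, by rw [mk_rep]⟩⟩
      simpa [submodule_mk] using hwW
    · obtain ⟨w, hwW, hw0, hw⟩ := exists_ne_zero_mem_eq_zero hW 0
      refine ⟨{mk K w hw0, mk K w hw0}, ⟨_, ?_, rfl⟩, pair_self_mem_conjugatePairs halt _⟩
      simpa [submodule_mk] using hwW

/-- The part outside `conjugatePairs ξ` of the block consisting of the pairs `p + x`, `x ∈ B`. -/
def reductLine (ξ : V →ₗ[K] V →ₗ[K] K) (p : ℙ K V) (B : Set (ℙ K V)) :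
    Set (Multiset (ℙ K V)) :=
  {m | ∃ x ∈ B, ({p, x} : Multiset (ℙ K V)) ∉ conjugatePairs ξ ∧ m = {p, x}}

theorem mem_reductLines_iff (halt : ξ.IsAlt) {l : Set (Multiset (ℙ K V))} :
    l ∈ reductLines (veroBlocks 2 (projLines K V)) (conjugatePairs ξ) ↔
      ∃ p, ∃ B ∈ projLines K V, (∃ x ∈ B, ({p, x} : Multiset (ℙ K V)) ∉ conjugatePairs ξ) ∧
        l = reductLine ξ p B := by
  have key : ∀ (p : ℙ K V) (B : Set (ℙ K V)),
      {m | ∃ x ∈ B, m = ({p, x} : Multiset (ℙ K V))} \ conjugatePairs ξ = reductLine ξ p B := by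
    intro p B
    ext m
    constructor
    · rintro ⟨⟨x, hx, rfl⟩, h⟩
      exact ⟨x, hx, h, rfl⟩
    · rintro ⟨x, hx, h, rfl⟩
      exact ⟨⟨x, hx, rfl⟩, h⟩
  constructor
  · rintro ⟨L, hL, hLH, rfl⟩
    rcases mem_veroBlocks_two_iff.1 hL with ⟨p, B, hB, rfl⟩ | ⟨B, -, rfl⟩
    · obtain ⟨_, ⟨x, hx, rfl⟩, h⟩ := Set.not_subset.1 hLH
      exact ⟨p, B, hB, ⟨x, hx, h⟩, key p B⟩
    · refine absurd ?_ hLH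
      rintro _ ⟨x, -, rfl⟩
      exact pair_self_mem_conjugatePairs halt x
  · rintro ⟨p, B, hB, ⟨x, hx, h⟩, rfl⟩
    exact ⟨_, mem_veroBlocks_two_iff.2 (Or.inl ⟨p, B, hB, rfl⟩),
      fun hsub => h (hsub ⟨x, hx, rfl⟩), (key p B).symm⟩

theorem reductLine_mem (halt : ξ.IsAlt) {p x : ℙ K V} {B : Set (ℙ K V)}
    (hB : B ∈ projLines K V) (hx : x ∈ B)
    (h : ({p, x} : Multiset (ℙ K V)) ∉ conjugatePairs ξ) :
    reductLine ξ p B ∈ reductLines (veroBlocks 2 (projLines K V)) (conjugatePairs ξ) :=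
  (mem_reductLines_iff halt).2 ⟨p, B, hB, ⟨x, hx, h⟩, rfl⟩

theorem ne_of_pair_notMem (halt : ξ.IsAlt) {p x : ℙ K V}
    (h : ({p, x} : Multiset (ℙ K V)) ∉ conjugatePairs ξ) : p ≠ x := by
  rintro rfl
  exact h (pair_self_mem_conjugatePairs halt p)

theorem fullyJoined_reductLine (halt : ξ.IsAlt) (p : ℙ K V) (B C : Set (ℙ K V)) :
    FullyJoined (reductLines (veroBlocks 2 (projLines K V)) (conjugatePairs ξ))
      (reductLine ξ p B) (reductLine ξ p C) := by
  rintro _ ⟨x, -, hx, rfl⟩ _ ⟨y, -, hy, rfl⟩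
  obtain ⟨A, hA, hxA, hyA⟩ : ∃ A ∈ projLines K V, x ∈ A ∧ y ∈ A := by
    by_cases hxy : x = y
    · subst hxy
      obtain ⟨A, hA, -, hxA⟩ := exists_projLine_through (ne_of_pair_notMem halt hx)
      exact ⟨A, hA, hxA, hxA⟩
    · exact exists_projLine_through hxy
  exact ⟨_, reductLine_mem halt hA hxA hx, ⟨x, hxA, hx, rfl⟩, ⟨y, hyA, hy, rfl⟩⟩

theorem exists_mem_projLine_ne_ne (hchar : (2 : K) ≠ 0) (halt : ξ.IsAlt) {p x : ℙ K V}
    {B : Set (ℙ K V)} (hB : B ∈ projLines K V) (hx : x ∈ B)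
    (h : ({p, x} : Multiset (ℙ K V)) ∉ conjugatePairs ξ) (a b : ℙ K V) :
    ∃ y ∈ B, ({p, y} : Multiset (ℙ K V)) ∉ conjugatePairs ξ ∧ y ≠ a ∧ y ≠ b := by
  obtain ⟨W, hW, rfl⟩ := hB
  obtain ⟨w, hwW, hw0, hw⟩ := exists_ne_zero_mem_eq_zero hW (ξ p.rep)
  rw [pair_mem_conjugatePairs_iff halt] at h
  have hxW := submodule_le_iff_rep_mem.1 hx
  have hval : ∀ t : K, ξ p.rep (x.rep + t • w) = ξ p.rep x.rep := by simp [hw]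
  have hne : ∀ t : K, x.rep + t • w ≠ 0 := by
    intro t ht
    apply h
    rw [← hval t, ht, map_zero]
  have hinj : ∀ s t : K, mk K _ (hne s) = mk K _ (hne t) → s = t := by
    intro s t hst
    obtain ⟨c, hc⟩ := (mk_eq_mk_iff' K _ _ _ _).1 hst
    have h1 := congrArg (ξ p.rep) hc
    rw [map_smul, hval, hval, smul_eq_mul] at h1
    obtain rfl : c = 1 := by
      apply mul_right_cancel₀ h
      rw [h1, one_mul]
    have h2 : (t - s) • w = 0 := by
      rw [one_smul] at hc
      rw [sub_smul, sub_eq_zero]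
      exact add_left_cancel hc
    rcases smul_eq_zero.1 h2 with h3 | h3
    · exact (sub_eq_zero.1 h3).symm
    · exact absurd h3 hw0
  have hmem : ∀ t : K, (mk K _ (hne t)).submodule ≤ W ∧
      ({p, mk K _ (hne t)} : Multiset (ℙ K V)) ∉ conjugatePairs ξ := by
    intro t
    constructor
    · rw [submodule_mk, Submodule.span_singleton_le_iff_mem]
      exact W.add_mem hxW (W.smul_mem t hwW)
    · have := mk_pair_mem_conjugatePairs_iff halt p.rep_nonzero (hne t)
      rw [mk_rep] at this
      rwa [this, hval]
  have h11 : (1 : K) ≠ -1 := by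
    intro h
    apply hchar
    linear_combination h
  have h01 : (0 : K) ≠ -1 := by
    intro h
    apply one_ne_zero (α := K)
    linear_combination h
  by_contra! hcon
  have hc : ∀ t : K, mk K _ (hne t) = a ∨ mk K _ (hne t) = b := fun t =>
    or_iff_not_imp_left.2 (hcon _ (hmem t).1 (hmem t).2)
  have e0 := hc 0
  have e1 := hc 1
  have e2 := hc (-1)
  have n01 := fun h => zero_ne_one (hinj 0 1 h)
  have n02 := fun h => h01 (hinj 0 (-1) h)
  have n12 := fun h => h11 (hinj 1 (-1) h)
  grind

theorem eq_of_fullyJoined_reductLine (hchar : (2 : K) ≠ 0) (halt : ξ.IsAlt)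
    {p q x y : ℙ K V} {B C : Set (ℙ K V)} (hB : B ∈ projLines K V) (hC : C ∈ projLines K V)
    (hx : x ∈ B) (hpx : ({p, x} : Multiset (ℙ K V)) ∉ conjugatePairs ξ)
    (hy : y ∈ C) (hqy : ({q, y} : Multiset (ℙ K V)) ∉ conjugatePairs ξ)
    (h : FullyJoined (reductLines (veroBlocks 2 (projLines K V)) (conjugatePairs ξ))
      (reductLine ξ p B) (reductLine ξ q C)) : p = q := by
  by_contra hpq
  obtain ⟨x', hx', hpx', hxq, -⟩ := exists_mem_projLine_ne_ne hchar halt hB hx hpx q q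
  obtain ⟨y', hy', hqy', hyp, hyx⟩ := exists_mem_projLine_ne_ne hchar halt hC hy hqy p x'
  obtain ⟨l, hl, h1, h2⟩ := h _ ⟨x', hx', hpx', rfl⟩ _ ⟨y', hy', hqy', rfl⟩
  obtain ⟨a, A, -, -, rfl⟩ := (mem_reductLines_iff halt).1 hl
  obtain ⟨u, -, -, hu⟩ := h1
  obtain ⟨v, -, -, hv⟩ := h2
  rw [Multiset.pair_eq_pair_iff_or] at hu hv
  grind

theorem atMostTwoClassesAtPoint_reductLines (halt : ξ.IsAlt) :
    AtMostTwoClassesAtPoint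
      (reductLines (veroBlocks 2 (projLines K V)) (conjugatePairs ξ)) := by
  intro m l₁ h₁ l₂ h₂ l₃ h₃ hm₁ hm₂ hm₃
  obtain ⟨p, B, -, -, rfl⟩ := (mem_reductLines_iff halt).1 h₁
  obtain ⟨q, C, -, -, rfl⟩ := (mem_reductLines_iff halt).1 h₂
  obtain ⟨r, E, -, -, rfl⟩ := (mem_reductLines_iff halt).1 h₃
  have hpqr : p = q ∨ p = r ∨ q = r := by
    obtain ⟨x, -, -, rfl⟩ := hm₁
    obtain ⟨y, -, -, hy⟩ := hm₂
    obtain ⟨z, -, -, hz⟩ := hm₃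
    rw [Multiset.pair_eq_pair_iff_or] at hy hz
    grind
  rcases hpqr with rfl | rfl | rfl
  · exact Or.inl (fullyJoined_reductLine halt _ _ _)
  · exact Or.inr (Or.inl (fullyJoined_reductLine halt _ _ _))
  · exact Or.inr (Or.inr (fullyJoined_reductLine halt _ _ _))

/-- Some two distinct points outside the radical of `ξ` are conjugate. -/
theorem exists_conjugate_points (hdim : 3 ≤ Module.rank K V) (halt : ξ.IsAlt) (hξ : ξ ≠ 0) :
    ∃ p q x y : ℙ K V, p ≠ q ∧ ({p, q} : Multiset (ℙ K V)) ∈ conjugatePairs ξ ∧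
      ({p, x} : Multiset (ℙ K V)) ∉ conjugatePairs ξ ∧
      ({q, y} : Multiset (ℙ K V)) ∉ conjugatePairs ξ := by
  obtain ⟨u, hu⟩ : ∃ u, ξ u ≠ 0 := by
    by_contra! h
    exact hξ (LinearMap.ext h)
  obtain ⟨v, huv⟩ : ∃ v, ξ u v ≠ 0 := by
    by_contra! h
    exact hu (LinearMap.ext h)
  obtain ⟨z, huz, hz⟩ : ∃ z, ξ u z = 0 ∧ z ∉ Submodule.span K {u} := by
    by_contra! h
    have hspan : (⊤ : Submodule K V) ≤ Submodule.span K {u, v} := by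
      intro w _
      have h1 := h (w - (ξ u w / ξ u v) • v) (by simp [huv])
      obtain ⟨c, hc⟩ := Submodule.mem_span_singleton.1 h1
      exact Submodule.mem_span_pair.2 ⟨c, ξ u w / ξ u v, by rw [hc]; abel⟩
    have h2 : Module.rank K V ≤ 2 := by
      rw [← rank_top K V]
      refine (Submodule.rank_mono hspan).trans ((rank_span_le _).trans ?_)
      exact (Cardinal.mk_insert_le).trans (by rw [Cardinal.mk_singleton]; norm_num)
    exact absurd (hdim.trans h2) (by norm_num)
  obtain ⟨q, huq, hq, y, hqy⟩ : ∃ q, ξ u q = 0 ∧ q ∉ Submodule.span K {u} ∧ ∃ y, ξ q y ≠ 0 := by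
    by_cases hzr : ∃ y, ξ z y ≠ 0
    · exact ⟨z, huz, hz, hzr⟩
    · push Not at hzr
      refine ⟨u + z, by simp [huz, halt u], ?_, v, by simp [hzr, huv]⟩
      rwa [Submodule.add_mem_iff_right _ (Submodule.mem_span_singleton_self u)]
  have hu0 : u ≠ 0 := by rintro rfl; simp at huv
  have hv0 : v ≠ 0 := by rintro rfl; simp at huv
  have hq0 : q ≠ 0 := by rintro rfl; simp at hqy
  have hy0 : y ≠ 0 := by rintro rfl; simp at hqy
  refine ⟨mk K u hu0, mk K q hq0, mk K v hv0, mk K y hy0, ?_, ?_, ?_, ?_⟩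
  · intro h
    obtain ⟨c, hc⟩ := (mk_eq_mk_iff' K _ _ _ _).1 h.symm
    exact hq (Submodule.mem_span_singleton.2 ⟨c, hc⟩)
  · rwa [mk_pair_mem_conjugatePairs_iff halt]
  · rwa [mk_pair_mem_conjugatePairs_iff halt]
  · rwa [mk_pair_mem_conjugatePairs_iff halt]

theorem not_anyTwoClassesMeet_reductLines (hchar : (2 : K) ≠ 0) (hdim : 3 ≤ Module.rank K V)
    (halt : ξ.IsAlt) (hξ : ξ ≠ 0) :
    ¬ AnyTwoClassesMeet (reductLines (veroBlocks 2 (projLines K V)) (conjugatePairs ξ)) := by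
  intro h
  obtain ⟨p, q, x, y, hpq, hpqH, hpx, hqy⟩ := exists_conjugate_points hdim halt hξ
  obtain ⟨B, hB, -, hxB⟩ := exists_projLine_through (ne_of_pair_notMem halt hpx)
  obtain ⟨C, hC, -, hyC⟩ := exists_projLine_through (ne_of_pair_notMem halt hqy)
  obtain ⟨l₁, h₁, l₂, h₂, hj₁, hj₂, m, hm₁, hm₂⟩ :=
    h _ (reductLine_mem halt hB hxB hpx) _ (reductLine_mem halt hC hyC hqy)
  obtain ⟨p', B', hB', ⟨x', hx', hpx'⟩, rfl⟩ := (mem_reductLines_iff halt).1 h₁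
  obtain ⟨q', C', hC', ⟨y', hy', hqy'⟩, rfl⟩ := (mem_reductLines_iff halt).1 h₂
  obtain rfl := eq_of_fullyJoined_reductLine hchar halt hB hB' hxB hpx hx' hpx' hj₁
  obtain rfl := eq_of_fullyJoined_reductLine hchar halt hC hC' hyC hqy hy' hqy' hj₂
  obtain ⟨s, -, hs, rfl⟩ := hm₁
  obtain ⟨t, -, -, ht⟩ := hm₂
  rcases Multiset.pair_eq_pair_iff_or.1 ht with ⟨h1, -⟩ | ⟨-, rfl⟩
  · exact hpq h1
  · exact hs hpqH

end Projective

section Affine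

variable {D W : Type*} [DivisionRing D] [AddCommGroup W] [Module D W]

theorem fullyJoined_veroBlock {k r : ℕ} {e : Multiset W} {w : W} (hw : w ≠ 0) (h0 : 0 < r)
    (hrk : r ≤ k) (he : Multiset.card e = k - r) (B C : Set W) :
    FullyJoined (veroBlocks k (agLines D W)) (veroBlock e r B) (veroBlock e r C) := by
  rintro _ ⟨x, -, rfl⟩ _ ⟨y, -, rfl⟩
  obtain ⟨A, hA, hxA, hyA⟩ : ∃ A ∈ agLines D W, x ∈ A ∧ y ∈ A := by
    by_cases hxy : y = x
    · subst hxy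
      exact ⟨_, ⟨y, w, hw, rfl⟩, ⟨0, by simp⟩, ⟨0, by simp⟩⟩
    · exact ⟨_, ⟨x, y - x, sub_ne_zero.2 hxy, rfl⟩, ⟨0, by simp⟩, ⟨1, by simp⟩⟩
  exact ⟨_, ⟨r, e, A, h0, hrk, he, hA, rfl⟩, ⟨x, hxA, rfl⟩, ⟨y, hyA, rfl⟩⟩

theorem exists_add_replicate_eq {S : Type*} {k r s : ℕ} (hk : k ≤ 2) {e f : Multiset S}
    (x : S) (hr : 0 < r) (hrk : r ≤ k) (he : Multiset.card e = k - r) (hs : 0 < s)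
    (hsk : s ≤ k) (hf : Multiset.card f = k - s) :
    ∃ a b, e + Multiset.replicate r a = f + Multiset.replicate s b := by
  by_cases hr' : r = k
  · subst hr'
    obtain rfl := Multiset.card_eq_zero.1 (he.trans (Nat.sub_self r))
    by_cases hs' : s = r
    · subst hs'
      obtain rfl := Multiset.card_eq_zero.1 (hf.trans (Nat.sub_self s))
      exact ⟨x, x, rfl⟩
    · obtain ⟨rfl, rfl⟩ : s = 1 ∧ r = 2 := by omega
      obtain ⟨c, rfl⟩ := Multiset.card_eq_one.1 hf
      exact ⟨c, c, by simp [Multiset.replicate_succ]⟩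
  · obtain ⟨rfl, rfl⟩ : r = 1 ∧ k = 2 := by omega
    obtain ⟨c, rfl⟩ := Multiset.card_eq_one.1 he
    obtain rfl | rfl : s = 1 ∨ s = 2 := by omega
    · obtain ⟨d, rfl⟩ := Multiset.card_eq_one.1 hf
      exact ⟨d, c, by simpa using Multiset.pair_comm c d⟩
    · obtain rfl := Multiset.card_eq_zero.1 hf
      exact ⟨c, c, by simp [Multiset.replicate_succ]⟩

theorem anyTwoClassesMeet_veroBlocks {k : ℕ} (hk : k ≤ 2) :
    AnyTwoClassesMeet (veroBlocks k (agLines D W)) := by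
  rintro _ ⟨r, e, _, hr, hrk, he, ⟨v, w, hw, rfl⟩, rfl⟩ _ ⟨s, f, C, hs, hsk, hf, -, rfl⟩
  obtain ⟨a, b, hab⟩ := exists_add_replicate_eq hk v hr hrk he hs hsk hf
  exact ⟨_, ⟨r, e, _, hr, hrk, he, ⟨a, w, hw, rfl⟩, rfl⟩,
    _, ⟨s, f, _, hs, hsk, hf, ⟨b, w, hw, rfl⟩, rfl⟩,
    fullyJoined_veroBlock hw hr hrk he _ _, fullyJoined_veroBlock hw hs hsk hf _ _,
    e + Multiset.replicate r a, ⟨a, ⟨0, by simp⟩, rfl⟩, ⟨b, ⟨0, by simp⟩, hab⟩⟩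

theorem not_blockJoined_replicate {S : Type*} {L : Set (Set S)} {k r s : ℕ} {x y z : S}
    (hxy : x ≠ y) (hxz : x ≠ z) (hyz : y ≠ z) (hr : 0 < r) (hs : 0 < s) (hrs : r ≠ s) :
    ¬ BlockJoined (veroBlocks k L) (Multiset.replicate (k - r) x + Multiset.replicate r y)
      (Multiset.replicate (k - s) x + Multiset.replicate s z) := by
  classical
  rintro ⟨_, ⟨t, e, B, -, -, -, -, rfl⟩, ⟨a, -, ha⟩, ⟨b, -, hb⟩⟩
  have h1 := congrArg (Multiset.count y) ha
  have h2 := congrArg (Multiset.count y) hb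
  have h3 := congrArg (Multiset.count z) ha
  have h4 := congrArg (Multiset.count z) hb
  simp only [Multiset.count_add, Multiset.count_replicate] at h1 h2 h3 h4
  grind

theorem not_atMostTwoClassesAtPoint_veroBlocks {k : ℕ} (hk : 3 ≤ k) {w : W} (hw : w ≠ 0)
    {t : D} (ht0 : t ≠ 0) (ht1 : t ≠ 1) :
    ¬ AtMostTwoClassesAtPoint (veroBlocks k (agLines D W)) := by
  intro h
  set B : Set W := {x | ∃ t : D, x = 0 + t • w} with hBdef
  have hmem : ∀ r, 0 < r → r ≤ 3 →
      veroBlock (Multiset.replicate (k - r) 0) r B ∈ veroBlocks k (agLines D W) :=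
    fun r h0 h3 => ⟨r, _, B, h0, by omega, by simp, ⟨0, w, hw, rfl⟩, rfl⟩
  have hpt : ∀ r, r ≤ 3 →
      Multiset.replicate k (0 : W) ∈ veroBlock (Multiset.replicate (k - r) 0) r B := by
    intro r h3
    refine ⟨0, ⟨0, by simp⟩, ?_⟩
    rw [← Multiset.replicate_add]
    congr 1
    omega
  have hnot : ∀ r s, 0 < r → 0 < s → r ≠ s → ¬ FullyJoined (veroBlocks k (agLines D W))
      (veroBlock (Multiset.replicate (k - r) 0) r B)
      (veroBlock (Multiset.replicate (k - s) 0) s B) := by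
    intro r s hr hs hrs hj
    refine not_blockJoined_replicate hw.symm (smul_ne_zero ht0 hw).symm ?_ hr hs hrs
      (hj _ ⟨w, ⟨1, by simp⟩, rfl⟩ _ ⟨t • w, ⟨t, by simp⟩, rfl⟩)
    intro hwt
    have h1 : (t - 1) • w = 0 := by rw [sub_smul, one_smul, ← hwt, sub_self]
    rcases smul_eq_zero.1 h1 with h2 | h2
    · exact ht1 (sub_eq_zero.1 h2)
    · exact hw h2
  rcases h _ _ (hmem 1 (by simp) (by simp)) _ (hmem 2 (by simp) (by simp))
    _ (hmem 3 (by simp) (by simp)) (hpt 1 (by simp)) (hpt 2 (by simp)) (hpt 3 (by simp))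
    with h | h | h
  · exact hnot 1 2 (by simp) (by simp) (by simp) h
  · exact hnot 1 3 (by simp) (by simp) (by simp) h
  · exact hnot 2 3 (by simp) (by simp) (by simp) h

end Affine

theorem stmt_14 {K V : Type*} [Field K] [AddCommGroup V] [Module K V]
    (hchar : (2 : K) ≠ 0) (hdim : 3 ≤ Module.rank K V)
    (ξ : V →ₗ[K] V →ₗ[K] K) (halt : ξ.IsAlt) (hξ : ξ ≠ 0)
    (H : Set (Multiset (Projectivization K V))) (hH : H = conjugatePairs ξ) :
    IsGeomHyperplane (veroPoints (Projectivization K V) 2) (veroBlocks 2 (projLines K V)) H ∧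
    ∀ (D W : Type*) [DivisionRing D] [AddCommGroup W] [Module D W],
      3 ≤ Cardinal.mk D → ∀ k : ℕ,
      ¬ GeomIsomorphic
          (veroPoints (Projectivization K V) 2 \ H) (reductLines (veroBlocks 2 (projLines K V)) H)
          (veroPoints W k) (veroBlocks k (agLines D W)) := by
  subst hH
  refine ⟨isGeomHyperplane_conjugatePairs halt hξ, ?_⟩
  rintro D W _ _ _ hD k ⟨φ, hφ, hB⟩
  have hsub : ∀ l ∈ reductLines (veroBlocks 2 (projLines K V)) (conjugatePairs ξ),
      l ⊆ veroPoints (Projectivization K V) 2 \ conjugatePairs ξ := by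
    rintro _ ⟨L, hL, -, rfl⟩
    exact Set.sdiff_subset_sdiff_left (veroBlocks_subset_veroPoints hL)
  have hmeet : ¬ AnyTwoClassesMeet (veroBlocks k (agLines D W)) := fun h =>
    not_anyTwoClassesMeet_reductLines hchar hdim halt hξ (h.of_image hφ.injOn hsub hB)
  have hk : 3 ≤ k := by
    by_contra hk
    exact hmeet (anyTwoClassesMeet_veroBlocks (by omega))
  obtain ⟨w, hw⟩ : ∃ w : W, w ≠ 0 := by
    by_contra! h
    apply hmeet
    rintro _ ⟨_, _, _, -, -, -, ⟨_, w, hw, -⟩, -⟩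
    exact absurd (h w) hw
  obtain ⟨t, ht0, ht1⟩ : ∃ t : D, t ≠ 0 ∧ t ≠ 1 := Cardinal.exists_ne_ne_of_three_le hD 0 1
  exact not_atMostTwoClassesAtPoint_veroBlocks hk hw ht0 ht1
    ((atMostTwoClassesAtPoint_reductLines halt).image hφ.injOn hsub hB)
end
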